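/- The SR transformation is complete for every U-WLL DCTRS R: for all terms s, t ∈ T(F,V), if s →*_R t, then ⟨s̄⟩ →*_{SR(R)} ⟨t̄⟩. -/

import Mathlib

set_option autoImplicit false

/-- First-order terms over a signature `F` and variables `V`. -/
inductive Term (F : Type) (V : Type) : Type where
  | var : V → Term F V
  | app : F → List (Term F V) → Term F V

namespace Term

variable {F V G W : Type}

/-- Application of a substitution. -/
def subst (σ : V → Term F W) : Term F V → Term F W
  | .var x => σ x
  | .app f ts => .app f (ts.attach.map (fun ⟨t, _⟩ => subst σ t))

/-- Renaming of variables. -/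
def rename (g : V → W) (t : Term F V) : Term F W := t.subst (fun x => .var (g x))

/-- Mapping of function symbols. -/
def mapF (g : F → G) : Term F V → Term G V
  | .var x => .var x
  | .app f ts => .app (g f) (ts.attach.map (fun ⟨t, _⟩ => mapF g t))

/-- Number of occurrences of the variable `x` in a term. -/
def count [DecidableEq V] (x : V) : Term F V → ℕ
  | .var y => if y = x then 1 else 0
  | .app _ ts => (ts.attach.map (fun ⟨t, _⟩ => count x t)).sum

/-- The list of variables occurring in a term (with repetitions). -/
def varList : Term F V → List V
  | .var x => [x]
  | .app _ ts => ts.attach.flatMap (fun ⟨t, _⟩ => varList t)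

/-- A term is linear if every variable occurs at most once in it. -/
def Linear [DecidableEq V] (t : Term F V) : Prop := ∀ x : V, t.count x ≤ 1

/-- Well-formedness of a term with respect to an arity assignment. -/
inductive WF (ar : F → ℕ) : Term F V → Prop where
  | var (x : V) : WF ar (.var x)
  | app (f : F) (ts : List (Term F V)) :
      ts.length = ar f → (∀ t ∈ ts, WF ar t) → WF ar (.app f ts)

end Term

/-- Number of occurrences of `x` in a sequence of terms. -/
def seqCount {F V : Type} [DecidableEq V] (x : V) (ts : List (Term F V)) : ℕ :=
  (ts.map (Term.count x)).sum

/-- An oriented conditional rewrite rule `l → r ⇐ s1 ≈ t1, …, sk ≈ tk`. -/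
structure CRule (F V : Type) : Type where
  lhs : Term F V
  rhs : Term F V
  conds : List (Term F V × Term F V)

/-- A conditional term rewriting system: a set of conditional rules. -/
abbrev CTRS (F V : Type) := Set (CRule F V)

namespace CRule

variable {F V W : Type}

/-- The sequence `l, t1, …, tk` of "pattern" terms of a rule. -/
def pats (ρ : CRule F V) : List (Term F V) := ρ.lhs :: ρ.conds.map Prod.snd

/-- The sequence `r, s1, …, sk` of "source" terms of a rule. -/
def srcs (ρ : CRule F V) : List (Term F V) := ρ.rhs :: ρ.conds.map Prod.fst

/-- Weak left-linearity: `|l,t1,…,tk|_x = 1` for every `x ∈ Var(r,s1,…,sk)`. -/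
def WLL [DecidableEq V] (ρ : CRule F V) : Prop :=
  ∀ x : V, 0 < seqCount x ρ.srcs → seqCount x ρ.pats = 1

/-- Determinism: `Var(si) ⊆ Var(l, t1, …, t_{i−1})`. -/
def Det [DecidableEq V] (ρ : CRule F V) : Prop :=
  ∀ i : ℕ, ∀ h : i < ρ.conds.length, ∀ x : V,
    0 < Term.count x (ρ.conds.get ⟨i, h⟩).1 →
    0 < seqCount x (ρ.lhs :: (ρ.conds.take i).map Prod.snd)

/-- Type 3: `Var(r) ⊆ Var(l, s1, t1, …, sk, tk)`. -/
def Type3 [DecidableEq V] (ρ : CRule F V) : Prop :=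
  ∀ x : V, 0 < Term.count x ρ.rhs →
    0 < seqCount x (ρ.lhs :: ρ.conds.flatMap (fun c => [c.1, c.2]))

/-- The left-hand side is a non-variable term. -/
def LhsNonVar (ρ : CRule F V) : Prop := ∀ x : V, ρ.lhs ≠ .var x

/-- Renaming the variables of a rule. -/
def mapV (g : V → W) (ρ : CRule F V) : CRule F W :=
  ⟨ρ.lhs.rename g, ρ.rhs.rename g, ρ.conds.map (fun c => (c.1.rename g, c.2.rename g))⟩

end CRule

/-- `R` is a deterministic CTRS (of Type 3, left-hand sides non-variable). -/
def IsDCTRS {F V : Type} [DecidableEq V] (R : CTRS F V) : Prop :=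
  ∀ ρ ∈ R, ρ.Det ∧ ρ.Type3 ∧ ρ.LhsNonVar

/-- All rules of `R` are weakly left-linear. -/
def IsWLL {F V : Type} [DecidableEq V] (R : CTRS F V) : Prop := ∀ ρ ∈ R, ρ.WLL

/-- Closure of a relation under contexts (rewriting below the root). -/
inductive CtxStep {F V : Type} (root : Term F V → Term F V → Prop) :
    Term F V → Term F V → Prop where
  | root {s t : Term F V} : root s t → CtxStep root s t
  | congr {f : F} {pre post : List (Term F V)} {s t : Term F V} :
      CtxStep root s t →
      CtxStep root (.app f (pre ++ s :: post)) (.app f (pre ++ t :: post))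

/-- A root rewrite step using a rule of `R`, conditions evaluated with `prev`. -/
def RootStep {F V : Type} (R : CTRS F V) (prev : Term F V → Term F V → Prop)
    (s t : Term F V) : Prop :=
  ∃ ρ ∈ R, ∃ σ : V → Term F V,
    s = ρ.lhs.subst σ ∧ t = ρ.rhs.subst σ ∧
    ∀ c ∈ ρ.conds, Relation.ReflTransGen prev (c.1.subst σ) (c.2.subst σ)

/-- The level-stratified reduction relation `→_{(n),R}`. -/
def LevelStep {F V : Type} (R : CTRS F V) : ℕ → Term F V → Term F V → Prop
  | 0 => fun _ _ => False
  | n + 1 => CtxStep (RootStep R (LevelStep R n))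

/-- The reduction relation `→_R = ⋃_{n} →_{(n),R}`. -/
def Red {F V : Type} (R : CTRS F V) (s t : Term F V) : Prop :=
  ∃ n : ℕ, LevelStep R n s t

/-- Many-step reduction `→*_R`. -/
def RedStar {F V : Type} (R : CTRS F V) : Term F V → Term F V → Prop :=
  Relation.ReflTransGen (Red R)

/-- `n`-fold composition of a relation. -/
def NFold {α : Type} (r : α → α → Prop) : ℕ → α → α → Prop
  | 0 => fun a b => a = b
  | n + 1 => fun a c => ∃ b, r a b ∧ NFold r n b c

/-- One-hole contexts. -/
inductive Ctx (F V : Type) : Type where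
  | hole : Ctx F V
  | app : F → List (Term F V) → Ctx F V → List (Term F V) → Ctx F V

/-- Filling the hole of a context with a term. -/
def Ctx.fill {F V : Type} : Ctx F V → Term F V → Term F V
  | .hole, t => t
  | .app f pre C post, t => .app f (pre ++ C.fill t :: post)
/-- Signature extended with the fresh symbols `U^ρ_i`. -/
abbrev UF (F V : Type) := F ⊕ (CRule F V × ℕ)

/-- Embedding of terms over `F` into terms over the extended signature `U_R(F)`. -/
def liftF {F V : Type} (t : Term F V) : Term (UF F V) V := t.mapF Sum.inl

/-- The list `X⃗_i` enumerating `Var(l, t1, …, t_{i−1})` in a fixed order. -/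
def Xlist {F V : Type} [DecidableEq V] (ρ : CRule F V) (i : ℕ) : List V :=
  (ρ.lhs.varList ++ ((ρ.conds.take (i - 1)).map Prod.snd).flatMap Term.varList).dedup

/-- A dummy condition (used as a default, never relevant). -/
def dummyCond {F V : Type} (ρ : CRule F V) : Term F V × Term F V := (ρ.lhs, ρ.lhs)

/-- The term `U^ρ_i(t, X⃗_i)`. -/
def uterm {F V : Type} [DecidableEq V] (ρ : CRule F V) (i : ℕ) (t : Term F V) :
    Term (UF F V) V :=
  .app (Sum.inr (ρ, i)) (liftF t :: (Xlist ρ i).map Term.var)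

/-- Left-hand side of the `j`-th unraveled rule of `ρ` (j = 0, …, k). -/
def ulhs {F V : Type} [DecidableEq V] (ρ : CRule F V) (j : ℕ) : Term (UF F V) V :=
  if j = 0 then liftF ρ.lhs
  else uterm ρ j (ρ.conds.getD (j - 1) (dummyCond ρ)).2

/-- Right-hand side of the `j`-th unraveled rule of `ρ` (j = 0, …, k). -/
def urhs {F V : Type} [DecidableEq V] (ρ : CRule F V) (j : ℕ) : Term (UF F V) V :=
  if j = ρ.conds.length then liftF ρ.rhs
  else uterm ρ (j + 1) (ρ.conds.getD j (dummyCond ρ)).1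

/-- The unconditional rules `U(ρ)` obtained by unraveling the rule `ρ`. -/
def URules {F V : Type} [DecidableEq V] (ρ : CRule F V) : Set (CRule (UF F V) V) :=
  { r | ∃ j ≤ ρ.conds.length, r = ⟨ulhs ρ j, urhs ρ j, []⟩ }

/-- The simultaneous unraveling `U(R)` of a DCTRS `R`. -/
def USys {F V : Type} [DecidableEq V] (R : CTRS F V) : CTRS (UF F V) V :=
  ⋃ ρ ∈ R, URules ρ

/-- `R` is ultra-WLL (`U`-WLL): every rule of `U(R)` is WLL. -/
def IsUWLL {F V : Type} [DecidableEq V] (R : CTRS F V) : Prop :=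
  ∀ r ∈ USys R, r.WLL
/-- Variables used for terms over the extended signature `F̄`: original
variables plus a countable supply of fresh variables. -/
abbrev WVar (V : Type) := V ⊕ ℕ

/-- The extended signature `F̄` of the SR transformation: the original symbols
(`c̄` for constructors, `f̄` for defined symbols, with extra arguments appended),
the fresh constant `⊥`, the fresh unary symbol `⟨·⟩`, and the fresh tuple
symbols `[ ]^ρ_j`. -/
inductive SSym (F V : Type) : Type where
  | orig : F → SSym F V
  | bot : SSym F V
  | guard : SSym F V
  | tup : CRule F V → ℕ → SSym F V

/-- Terms over the extended signature `F̄`. -/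
abbrev STerm (F V : Type) := Term (SSym F V) (WVar V)

/-- The fresh constant `⊥`. -/
def botT {F V : Type} : STerm F V := .app .bot []

/-- The fresh unary symbol `⟨·⟩`. -/
def guardT {F V : Type} (t : STerm F V) : STerm F V := .app .guard [t]

/-- `t̄`: the embedding of `t ∈ T(F,V)` into `T(F̄,V)` in which all the extra
arguments of defined symbols are filled with `⊥`.  Here `mOf f` is the number
of conditional `f`-rules (0 for constructors). -/
def barT {F V : Type} (mOf : F → ℕ) : Term F V → STerm F V
  | .var x => .var (Sum.inl x)
  | .app f ts =>
      .app (.orig f)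
        ((ts.attach.map (fun ⟨t, _⟩ => barT mOf t)) ++ List.replicate (mOf f) botT)

mutual
/-- `ext(t)`: the embedding of `t ∈ T(F,V)` into `T(F̄,V)` in which the extra
arguments of defined symbols are filled with distinct fresh variables; a
counter is threaded through to keep the fresh variables distinct. -/
def extT {F V : Type} (mOf : F → ℕ) : Term F V → ℕ → STerm F V × ℕ
  | .var x, c => (.var (Sum.inl x), c)
  | .app f ts, c =>
      let p := extTList mOf ts c
      (.app (.orig f)
         (p.1 ++ (List.range (mOf f)).map (fun k => .var (Sum.inr (p.2 + k)))),
       p.2 + mOf f)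

/-- `ext` on lists of terms, threading the fresh-variable counter. -/
def extTList {F V : Type} (mOf : F → ℕ) : List (Term F V) → ℕ → List (STerm F V) × ℕ
  | [], c => ([], c)
  | t :: ts, c =>
      let p := extT mOf t c
      let q := extTList mOf ts p.2
      (p.1 :: q.1, q.2)
end

/-- The backtranslation `t̂`: the partial mapping erasing `⟨·⟩` and the extra
arguments of defined symbols, recovering a term over `F`. -/
def hatT {F V : Type} (ar : F → ℕ) : STerm F V → Option (Term F V)
  | .var (Sum.inl x) => some (.var x)
  | .var (Sum.inr _) => none
  | .app (.orig f) ts =>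
      Option.map (Term.app f)
        ((ts.take (ar f)).attach.mapM (fun t => hatT ar t.1))
  | .app .guard [t] => hatT ar t
  | .app _ _ => none
decreasing_by
  · have h1 : t.1 ∈ ts := List.mem_of_mem_take t.2
    have := List.sizeOf_lt_of_mem h1
    simp only [Term.app.sizeOf_spec]
    omega
  · simp
    omega

/-- Embedding of `T(F,V)` into the terms over the unraveling signature
`U_R(F)` with extended variables. -/
def liftUV {F V : Type} (t : Term F V) : Term (UF F V) (WVar V) :=
  (t.mapF Sum.inl).rename Sum.inl
/-- The list `V⃗_j` enumerating `Var(t1, …, t_{j−1})` in a fixed order. -/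
def Vlist {F V : Type} [DecidableEq V] (ρ : CRule F V) (j : ℕ) : List V :=
  (((ρ.conds.take (j - 1)).map Prod.snd).flatMap Term.varList).dedup

/-- The term `[⟨inner⟩, V⃗_j]^ρ_j` (used in the rewrite rules of `SR(R)`). -/
def tupT {F V : Type} [DecidableEq V] (ρ : CRule F V) (j : ℕ) (inner : STerm F V) :
    STerm F V :=
  .app (.tup ρ j) (guardT inner :: (Vlist ρ j).map (fun v => .var (Sum.inl v)))

/-- The `j`-th unconditional rule (j = 0, …, k) obtained by the SR
transformation from the `i`-th conditional `f`-rule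
`ρ : f(w1,…,wn) → r ⇐ s1 ≈ t1, …, sk ≈ tk` (where `i = idx ρ`). -/
def condSRRule {F V : Type} [DecidableEq V] (mOf : F → ℕ) (idx : CRule F V → ℕ)
    (ρ : CRule F V) (j : ℕ) : CRule (SSym F V) (WVar V) :=
  match ρ.lhs with
  | .var _ => ⟨barT mOf ρ.lhs, barT mOf ρ.rhs, []⟩  -- irrelevant (lhs is never a variable)
  | .app f ws =>
    let i := idx ρ
    let m := mOf f
    let p := extTList mOf ws 0
    let ws' := p.1
    let c0 := p.2
    let slot : STerm F V → List (STerm F V) := fun mid =>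
      (List.range m).map (fun q => if q = i - 1 then mid else .var (Sum.inr (c0 + q)))
    let k := ρ.conds.length
    ⟨(if j = 0 then
        Term.app (SSym.orig f) (ws' ++ slot botT)
      else
        Term.app (SSym.orig f)
          (ws' ++ slot (tupT ρ j (extT mOf (ρ.conds.getD (j - 1) (dummyCond ρ)).2 (c0 + m)).1))),
     (if j = k then
        guardT (barT mOf ρ.rhs)
      else
        Term.app (SSym.orig f)
          (ws' ++ slot (tupT ρ (j + 1) (barT mOf (ρ.conds.getD j (dummyCond ρ)).1)))),
     []⟩

/-- The unconditional rule `ext(l) → ⟨r̄⟩` obtained by the SR transformation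
from an unconditional rule `l → r`. -/
def uncondSRRule {F V : Type} (mOf : F → ℕ) (ρ : CRule F V) : CRule (SSym F V) (WVar V) :=
  ⟨(extT mOf ρ.lhs 0).1, guardT (barT mOf ρ.rhs), []⟩

/-- The auxiliary rule `⟨⟨x⟩⟩ → ⟨x⟩`. -/
def auxGuard {F V : Type} : CRule (SSym F V) (WVar V) :=
  ⟨guardT (guardT (.var (Sum.inr 0))), guardT (.var (Sum.inr 0)), []⟩

/-- The auxiliary rule shifting `⟨·⟩` upward over the `i`-th argument of the
symbol `f` (and resetting the extra arguments of defined symbols):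
`f̄(x1,…,⟨xi⟩,…,xn, z1,…,zm) → ⟨f̄(x1,…,xn, ⊥,…,⊥)⟩`. -/
def auxShift {F V : Type} (ar mOf : F → ℕ) (f : F) (i : ℕ) : CRule (SSym F V) (WVar V) :=
  ⟨Term.app (SSym.orig f)
     (((List.range (ar f)).map
         (fun q => if q = i then guardT (.var (Sum.inr q)) else .var (Sum.inr q))) ++
      (List.range (mOf f)).map (fun q => .var (Sum.inr (ar f + q)))),
   guardT (Term.app (SSym.orig f)
     (((List.range (ar f)).map (fun q => Term.var (Sum.inr q))) ++
      List.replicate (mOf f) botT)),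
   []⟩

/-- The SR transformation `SR(R)`: the unconditional TRS over `F̄` consisting of
the transformed rules of `R` together with the auxiliary rules `R_aux`. -/
def SRSys {F V : Type} [DecidableEq V] (R : CTRS F V) (ar mOf : F → ℕ)
    (idx : CRule F V → ℕ) : CTRS (SSym F V) (WVar V) :=
  { r | (∃ ρ ∈ R, ρ.conds = [] ∧ r = uncondSRRule mOf ρ) ∨
        (∃ ρ ∈ R, ρ.conds ≠ [] ∧ ∃ j ≤ ρ.conds.length, r = condSRRule mOf idx ρ j) ∨
        r = auxGuard ∨
        (∃ (f : F) (i : ℕ), i < ar f ∧ r = auxShift ar mOf f i) }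

/-- Well-formedness of the data `(ar, mOf, idx)` describing the signature `F`
(with arities `ar`), the number `mOf f` of conditional `f`-rules of `R`, and
the ranking `idx` of the conditional rules of each defined symbol by some
arbitrary but fixed order. -/
def GoodSetup {F V : Type} [DecidableEq V] (R : CTRS F V) (ar mOf : F → ℕ)
    (idx : CRule F V → ℕ) : Prop :=
  (∀ ρ ∈ R, ρ.lhs.WF ar ∧ ρ.rhs.WF ar ∧ ∀ c ∈ ρ.conds, c.1.WF ar ∧ c.2.WF ar) ∧
  (∀ ρ ∈ R, ∃ (f : F) (ws : List (Term F V)), ρ.lhs = Term.app f ws) ∧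
  (∀ ρ ∈ R, ρ.conds ≠ [] →
     ∀ (f : F) (ws : List (Term F V)), ρ.lhs = Term.app f ws →
       1 ≤ idx ρ ∧ idx ρ ≤ mOf f) ∧
  (∀ ρ₁, ρ₁ ∈ R → ∀ ρ₂, ρ₂ ∈ R → ρ₁.conds ≠ [] → ρ₂.conds ≠ [] →
     ∀ (f : F) (ws₁ ws₂ : List (Term F V)),
       ρ₁.lhs = Term.app f ws₁ → ρ₂.lhs = Term.app f ws₂ →
       idx ρ₁ = idx ρ₂ → ρ₁ = ρ₂) ∧
  (∀ (f : F) (i : ℕ), 1 ≤ i → i ≤ mOf f →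
     ∃ ρ ∈ R, ρ.conds ≠ [] ∧ (∃ ws : List (Term F V), ρ.lhs = Term.app f ws) ∧ idx ρ = i)
/-- The unraveled system `U(R)` with its rules considered over the extended
variable set `WVar V` (so that it rewrites the terms in the image of `Φ`). -/
def USysW {F V : Type} [DecidableEq V] (R : CTRS F V) : CTRS (UF F V) (WVar V) :=
  { r | ∃ r' ∈ USys R, r = r'.mapV Sum.inl }

/-- Membership in the set `Φ(t)`: `PhiMem R ar mOf idx t u` states that
`u ∈ Φ(t)`, where `Φ` is the mapping (defined mutually with the auxiliary
mapping `Ψ`) from reachable terms of `T(F̄,V)` to sets of terms of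
`T(U_R(F),V)`:
* `Φ(x) = {x}` for a variable `x`;
* `Φ(⟨t⟩) = Φ(t)`;
* for an original symbol `f` applied to arguments `ts`, `Φ` contains
  `f(t'1,…,t'n)` for all `t'p ∈ Φ(tp)` of the first `ar f` arguments (this is
  the clause for constructors and the clause `Ψ(f̄(t⃗,⊥,…,⊥))` for defined
  symbols), and
* for each `i`-th extra argument of a defined symbol `f` that is a tuple
  `[⟨t'⟩, t'1,…,t'_{nj}]^ρ_j` (where `ρ` is the `i`-th conditional `f`-rule),
  `Φ` contains all terms `U^ρ_j(u', u⃗')` with `u' ∈ Φ(t')` and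
  `u⃗' ∈ Φ(σ(X⃗j))`, where `σ` is a substitution with `σ(V⃗j) = t'1,…,t'_{nj}`
  and `σ(ext(w1),…,ext(wn))` equal to the main arguments of the node. -/
inductive PhiMem {F V : Type} [DecidableEq V] (R : CTRS F V) (ar mOf : F → ℕ)
    (idx : CRule F V → ℕ) : STerm F V → Term (UF F V) (WVar V) → Prop where
  | var (x : WVar V) : PhiMem R ar mOf idx (.var x) (.var x)
  | guard {t : STerm F V} {u : Term (UF F V) (WVar V)} :
      PhiMem R ar mOf idx t u → PhiMem R ar mOf idx (guardT t) u
  | orig {f : F} {ts : List (STerm F V)} {us : List (Term (UF F V) (WVar V))} :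
      us.length = (ts.take (ar f)).length →
      (∀ p ∈ List.zip (ts.take (ar f)) us, PhiMem R ar mOf idx p.1 p.2) →
      PhiMem R ar mOf idx (.app (.orig f) ts) (.app (Sum.inl f) us)
  | cond {f : F} {ts : List (STerm F V)} {ρ : CRule F V} {ws : List (Term F V)}
      {j : ℕ} {tin : STerm F V} {vargs : List (STerm F V)}
      {σ : WVar V → STerm F V} {u : Term (UF F V) (WVar V)}
      {us : List (Term (UF F V) (WVar V))} :
      ρ ∈ R → ρ.conds ≠ [] → ρ.lhs = .app f ws →
      1 ≤ j → j ≤ ρ.conds.length →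
      (ts.drop (ar f))[idx ρ - 1]? = some (.app (.tup ρ j) (guardT tin :: vargs)) →
      (Vlist ρ j).map (fun v => σ (Sum.inl v)) = vargs →
      (extTList mOf ws 0).1.map (Term.subst σ) = ts.take (ar f) →
      PhiMem R ar mOf idx tin u →
      us.length = (Xlist ρ j).length →
      (∀ p ∈ List.zip (Xlist ρ j) us, PhiMem R ar mOf idx (σ (Sum.inl p.1)) p.2) →
      PhiMem R ar mOf idx (.app (.orig f) ts) (.app (Sum.inr (ρ, j)) (u :: us))

/-- The set `Φ(t)`. -/
def Phi {F V : Type} [DecidableEq V] (R : CTRS F V) (ar mOf : F → ℕ)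
    (idx : CRule F V → ℕ) (t : STerm F V) : Set (Term (UF F V) (WVar V)) :=
  { u | PhiMem R ar mOf idx t u }

/-- `σ' ∈ Φ(σ)`, the extension of `Φ` to substitutions:
`Dom(σ') ⊆ Dom(σ)` and `xσ' ∈ Φ(xσ)` for every `x ∈ Dom(σ)`. -/
def PhiSub {F V : Type} [DecidableEq V] (R : CTRS F V) (ar mOf : F → ℕ)
    (idx : CRule F V → ℕ) (σ : WVar V → STerm F V)
    (σ' : WVar V → Term (UF F V) (WVar V)) : Prop :=
  ∀ x : WVar V, PhiMem R ar mOf idx (σ x) (σ' x)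

/-- The relation `s ⇝ t`: for each `t' ∈ Φ(t)` there exists `s' ∈ Φ(s)` with
`s' →*_{U(R)} t'`. -/
def Leadsto {F V : Type} [DecidableEq V] (R : CTRS F V) (ar mOf : F → ℕ)
    (idx : CRule F V → ℕ) (s t : STerm F V) : Prop :=
  ∀ u, PhiMem R ar mOf idx t u →
    ∃ u', PhiMem R ar mOf idx s u' ∧ RedStar (USysW R) u' u

/-- A term of `T(F̄,V)` is reachable if it is a subterm of some term reachable
by `SR(R)` from `⟨s̄⟩` for some `s ∈ T(F,V)`. -/
def SRReachable {F V : Type} [DecidableEq V] (R : CTRS F V) (ar mOf : F → ℕ)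
    (idx : CRule F V → ℕ) (t : STerm F V) : Prop :=
  ∃ (s : Term F V) (C : Ctx (SSym F V) (WVar V)),
    s.WF ar ∧ RedStar (SRSys R ar mOf idx) (guardT (barT mOf s)) (C.fill t)

/-- The restriction `σ|_X` of a substitution to the variables of a term `t`. -/
def restrictTo {F V : Type} [DecidableEq V] (σ : WVar V → STerm F V) (t : STerm F V) :
    WVar V → STerm F V :=
  fun x => if 0 < t.count x then σ x else .var x

/-!
A conditional step `lσ → rσ` is simulated by applying the rules of the SR transformation to
`f̄(w̄σ, ⊥, …, ⊥)` one condition after the other, all of them under the same substitution: the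
original variables `x` go to the bar of `xσ` and the fresh ones to `⊥`. The outcome is
`⟨r̄σ⟩`, one guard too many, and the auxiliary rules move that guard up through the context.

The shift rules apply only at symbols with the right number of arguments, whereas `σ` may send the
extra variables of a rule to ill-formed terms. Replacing every ill-formed subterm by a fixed term
commutes with substitution into the well-formed terms of a rule, and turns a rewrite step below an
ill-formed node into an equality.
-/

namespace Term

variable {F V W : Type}

@[elab_as_elim, induction_eliminator]
theorem induction {motive : Term F V → Prop} (var : ∀ x, motive (.var x))
    (app : ∀ f ts, (∀ t ∈ ts, motive t) → motive (.app f ts)) : ∀ t, motive t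
  | .var x => var x
  | .app f ts => app f ts fun t _ => induction var app t

@[simp]
theorem subst_var (σ : V → Term F W) (x : V) : (var x).subst σ = σ x := by
  simp [subst]

@[simp]
theorem subst_app (σ : V → Term F W) (f : F) (ts : List (Term F V)) :
    (app f ts).subst σ = app f (ts.map (subst σ)) := by
  simp [subst]

/-- `trim ar d t` replaces every maximal subterm of `t` whose root symbol has the wrong number of
arguments by the term `d`. It is used to get rid of the ill-formed terms that a substitution may
introduce; `d` is arbitrary. -/
def trim (ar : F → ℕ) (d : Term F V) : Term F V → Term F V
  | .var x => .var x
  | .app f ts => if ts.length = ar f then .app f (ts.attach.map fun ⟨t, _⟩ => trim ar d t) else d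

variable {ar : F → ℕ} {d : Term F V}

theorem trim_app_of_length_eq {f : F} {ts : List (Term F V)} (h : ts.length = ar f) :
    trim ar d (app f ts) = app f (ts.map (trim ar d)) := by
  simp [trim, h]

theorem trim_app_of_length_ne {f : F} {ts : List (Term F V)} (h : ts.length ≠ ar f) :
    trim ar d (app f ts) = d := by
  simp [trim, h]

theorem WF.trim_eq {t : Term F V} (ht : t.WF ar) : trim ar d t = t := by
  induction ht with
  | var x => simp [trim]
  | app f ts hlen _ ih => rw [trim_app_of_length_eq hlen, List.map_congr_left ih, List.map_id']

theorem WF.trim_subst {t : Term F W} (ht : t.WF ar) (σ : W → Term F V) :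
    trim ar d (t.subst σ) = t.subst fun x => trim ar d (σ x) := by
  induction ht with
  | var x => simp
  | app f ts hlen _ ih =>
    rw [subst_app, trim_app_of_length_eq (by simpa using hlen)]
    simpa using ih

end Term

section Rewriting

variable {F V : Type} {R : CTRS F V}

theorem Red.of_mem {ρ : CRule F V} (hρ : ρ ∈ R) (hc : ρ.conds = []) (σ : V → Term F V) :
    Red R (ρ.lhs.subst σ) (ρ.rhs.subst σ) :=
  ⟨1, .root ⟨ρ, hρ, σ, rfl, rfl, by simp [hc]⟩⟩

theorem Red.app {s t : Term F V} (h : Red R s t) (f : F) (pre post : List (Term F V)) :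
    Red R (.app f (pre ++ s :: post)) (.app f (pre ++ t :: post)) := by
  obtain ⟨_ | n, h⟩ := h
  · exact h.elim
  · exact ⟨n + 1, .congr h⟩

theorem RedStar.app {s t : Term F V} (h : RedStar R s t) (f : F) (pre post : List (Term F V)) :
    RedStar R (.app f (pre ++ s :: post)) (.app f (pre ++ t :: post)) :=
  Relation.ReflTransGen.lift (fun u => Term.app f (pre ++ u :: post))
    (fun _ _ hst => hst.app f pre post) _ _ h

theorem CtxStep.reflGen_trim {root P : Term F V → Term F V → Prop} {ar : F → ℕ} {d : Term F V}
    (hroot : ∀ s t, root s t → P (Term.trim ar d s) (Term.trim ar d t))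
    (hP : ∀ f pre post s t, (pre ++ s :: post).length = ar f → P s t →
      P (.app f (pre ++ s :: post)) (.app f (pre ++ t :: post)))
    {s t : Term F V} (h : CtxStep root s t) :
    Relation.ReflGen P (Term.trim ar d s) (Term.trim ar d t) := by
  induction h with
  | root h => exact .single (hroot _ _ h)
  | @congr f pre post s t _ ih =>
    by_cases hlen : (pre ++ s :: post).length = ar f
    · have hlen' : (pre ++ t :: post).length = ar f := by simpa using hlen
      rw [Term.trim_app_of_length_eq hlen, Term.trim_app_of_length_eq hlen']
      simp only [List.map_append, List.map_cons]
      rcases (Relation.reflGen_iff _ _ _).1 ih with heq | h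
      · rw [heq]
      · exact .single (hP f _ _ _ _ (by simpa using hlen) h)
    · have hlen' : (pre ++ t :: post).length ≠ ar f := by simpa using hlen
      rw [Term.trim_app_of_length_ne hlen, Term.trim_app_of_length_ne hlen']

end Rewriting

section Guards

variable {F V : Type}

@[simp]
theorem botT_subst (θ : WVar V → STerm F V) : (botT : STerm F V).subst θ = botT := by
  simp [botT]

@[simp]
theorem guardT_subst (t : STerm F V) (θ : WVar V → STerm F V) :
    (guardT t).subst θ = guardT (t.subst θ) := by
  simp [guardT]

theorem RedStar.guard {R : CTRS (SSym F V) (WVar V)} {s t : STerm F V} (h : RedStar R s t) :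
    RedStar R (guardT s) (guardT t) :=
  h.app .guard [] []

variable [DecidableEq V] {R : CTRS F V} {ar mOf : F → ℕ} {idx : CRule F V → ℕ}

theorem red_guardT_guardT (t : STerm F V) :
    Red (SRSys R ar mOf idx) (guardT (guardT t)) (guardT t) := by
  have hmem : auxGuard ∈ SRSys R ar mOf idx := .inr (.inr (.inl rfl))
  simpa [auxGuard] using Red.of_mem hmem rfl fun _ => t

theorem red_shift_guardT {f : F} {ts es : List (STerm F V)} (hts : ts.length = ar f)
    (hes : es.length = mOf f) (i : ℕ) (hi : i < ts.length) :
    Red (SRSys R ar mOf idx) (.app (.orig f) (ts.set i (guardT ts[i]) ++ es))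
      (guardT (.app (.orig f) (ts ++ List.replicate (mOf f) botT))) := by
  have hmem : auxShift ar mOf f i ∈ SRSys R ar mOf idx :=
    .inr (.inr (.inr ⟨f, i, hts ▸ hi, rfl⟩))
  let θ : WVar V → STerm F V := Sum.elim (fun _ => botT) fun q => (ts ++ es).getD q botT
  have hargs : ((List.range (ar f)).map fun q => .var (.inr q)).map (Term.subst θ) = ts := by
    refine List.ext_getElem (by simp [hts]) fun q _ hq => ?_
    simp [θ, List.getElem?_append_left hq, hq]
  have hguarded : ((List.range (ar f)).map fun q =>
      if q = i then guardT (.var (.inr q)) else .var (.inr q)).map (Term.subst θ) =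
        ts.set i (guardT ts[i]) := by
    refine List.ext_getElem (by simp [hts]) fun q _ hq => ?_
    have hq' : q < ts.length := by simpa using hq
    rcases eq_or_ne q i with rfl | hqi
    · simp [θ, List.getElem?_append_left hq', hq']
    · simp [θ, List.getElem?_append_left hq', hq', hqi, hqi.symm]
  have hextra :
      ((List.range (mOf f)).map fun q => .var (.inr (ar f + q))).map (Term.subst θ) = es := by
    refine List.ext_getElem (by simp [hes]) fun q _ hq => ?_
    simp [θ, ← hts, hq]
  have hred := Red.of_mem hmem rfl θ
  simp only [auxShift, guardT_subst, Term.subst_app, List.map_append, List.map_replicate,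
    botT_subst] at hred
  rwa [hguarded, hextra, hargs] at hred

end Guards

section BarSubst

variable {F V : Type} (mOf : F → ℕ)

@[simp]
theorem barT_var (x : V) : barT mOf (.var x : Term F V) = .var (.inl x) := by
  simp [barT]

@[simp]
theorem barT_app (f : F) (ts : List (Term F V)) :
    barT mOf (.app f ts) =
      .app (.orig f) (ts.map (barT mOf) ++ List.replicate (mOf f) botT) := by
  simp [barT]

/-- The substitution `σ̄` on the extended variables that simulates `σ`: `xσ̄` is the bar of `xσ` for
an original variable `x`, and `⊥` for a fresh one, so that `ext(t)σ̄` and `t̄σ̄` coincide. -/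
def barSubst (σ : V → Term F V) : WVar V → STerm F V :=
  Sum.elim (fun x => barT mOf (σ x)) fun _ => botT

variable (σ : V → Term F V)

@[simp]
theorem barSubst_inl (x : V) : barSubst mOf σ (.inl x) = barT mOf (σ x) :=
  rfl

@[simp]
theorem barSubst_inr (n : ℕ) : barSubst mOf σ (.inr n) = botT :=
  rfl

@[simp]
theorem barT_subst_barSubst (t : Term F V) :
    (barT mOf t).subst (barSubst mOf σ) = barT mOf (t.subst σ) := by
  induction t with
  | var x => simp
  | app f ts ih => simpa using ih

mutual

@[simp]
theorem extT_subst_barSubst : ∀ (t : Term F V) (c : ℕ),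
    (extT mOf t c).1.subst (barSubst mOf σ) = barT mOf (t.subst σ)
  | .var x, c => by simp [extT]
  | .app f ts, c => by
    simp [extT, extTList_map_subst_barSubst ts c, Function.comp_def]

@[simp]
theorem extTList_map_subst_barSubst : ∀ (ts : List (Term F V)) (c : ℕ),
    (extTList mOf ts c).1.map (Term.subst (barSubst mOf σ)) =
      ts.map fun t => barT mOf (t.subst σ)
  | [], c => by simp [extTList]
  | t :: ts, c => by
    simp [extTList, extT_subst_barSubst t c, extTList_map_subst_barSubst ts]

end

theorem slot_map_subst_barSubst (m i c : ℕ) (u : STerm F V) :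
    ((List.range m).map fun q => if q = i then u else .var (.inr (c + q))).map
      (Term.subst (barSubst mOf σ)) =
        (List.replicate m botT).set i (u.subst (barSubst mOf σ)) := by
  refine List.ext_getElem (by simp) fun q _ _ => ?_
  rcases eq_or_ne q i with rfl | hqi
  · simp
  · simp [hqi, hqi.symm]

end BarSubst

section CondRules

variable {F V : Type} [DecidableEq V] (mOf : F → ℕ) (idx : CRule F V → ℕ) (σ : V → Term F V)
  (ρ : CRule F V)

/-- The term `f̄(w̄₁σ̄, …, w̄ₙσ̄, ⊥, …, [⟨u⟩, V⃗ⱼσ̄]^ρ_j, …, ⊥)`, for `ρ` a rule with left-hand side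
`f(w₁, …, wₙ)`: the state of the simulation of a `ρ`-step while its `j`-th condition is being
evaluated. The tuple sits at position `idx ρ - 1` since `idx` counts from `1`. -/
def condState (f : F) (ws : List (Term F V)) (j : ℕ) (u : STerm F V) : STerm F V :=
  .app (.orig f) ((ws.map fun w => barT mOf (w.subst σ)) ++
    (List.replicate (mOf f) botT).set (idx ρ - 1)
      (.app (.tup ρ j) (guardT u :: (Vlist ρ j).map fun v => barT mOf (σ v))))

theorem tupT_subst_barSubst (j : ℕ) (u : STerm F V) :
    (tupT ρ j u).subst (barSubst mOf σ) =
      .app (.tup ρ j) (guardT (u.subst (barSubst mOf σ)) ::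
        (Vlist ρ j).map fun v => barT mOf (σ v)) := by
  simp [tupT]

theorem condSRRule_conds (j : ℕ) : (condSRRule mOf idx ρ j).conds = [] := by
  unfold condSRRule
  split <;> rfl

variable {ρ} {f : F} {ws : List (Term F V)} (hl : ρ.lhs = .app f ws)

include hl

theorem condSRRule_zero_lhs_subst :
    (condSRRule mOf idx ρ 0).lhs.subst (barSubst mOf σ) = barT mOf (ρ.lhs.subst σ) := by
  simp only [condSRRule, hl, if_true, Term.subst_app, List.map_append,
    extTList_map_subst_barSubst, slot_map_subst_barSubst]
  simp

theorem condSRRule_succ_lhs_subst {j : ℕ} (hj : j < ρ.conds.length) :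
    (condSRRule mOf idx ρ (j + 1)).lhs.subst (barSubst mOf σ) =
      condState mOf idx σ ρ f ws (j + 1) (barT mOf (ρ.conds[j].2.subst σ)) := by
  simp only [condSRRule, hl, Nat.succ_ne_zero, if_false, Term.subst_app, List.map_append,
    extTList_map_subst_barSubst, slot_map_subst_barSubst, tupT_subst_barSubst,
    extT_subst_barSubst, Nat.add_sub_cancel, List.getD_eq_getElem _ _ hj, condState]

theorem condSRRule_rhs_subst {j : ℕ} (hj : j < ρ.conds.length) :
    (condSRRule mOf idx ρ j).rhs.subst (barSubst mOf σ) =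
      condState mOf idx σ ρ f ws (j + 1) (barT mOf (ρ.conds[j].1.subst σ)) := by
  simp only [condSRRule, hl, hj.ne, if_false, Term.subst_app, List.map_append,
    extTList_map_subst_barSubst, slot_map_subst_barSubst, tupT_subst_barSubst,
    barT_subst_barSubst, List.getD_eq_getElem _ _ hj, condState]

theorem condSRRule_length_rhs_subst :
    (condSRRule mOf idx ρ ρ.conds.length).rhs.subst (barSubst mOf σ) =
      guardT (barT mOf (ρ.rhs.subst σ)) := by
  simp [condSRRule, hl]

end CondRules

section Simulation

variable {F V : Type} [DecidableEq V] {R : CTRS F V} {ar mOf : F → ℕ} {idx : CRule F V → ℕ}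
  {σ : V → Term F V} {ρ : CRule F V} {f : F} {ws : List (Term F V)}

theorem RedStar.condState_congr {S : CTRS (SSym F V) (WVar V)} {u v : STerm F V}
    (h : RedStar S (guardT u) (guardT v)) (j : ℕ) :
    RedStar S (condState mOf idx σ ρ f ws j u) (condState mOf idx σ ρ f ws j v) := by
  have htup := h.app (.tup ρ j) [] ((Vlist ρ j).map fun v => barT mOf (σ v))
  unfold condState
  simp only [List.set_eq_take_append_cons_drop]
  split
  · rw [← List.append_assoc, ← List.append_assoc]
    exact htup.app (.orig f) _ _
  · exact .refl

theorem redStar_condSRRule_lhs (hρ : ρ ∈ R) (hc : ρ.conds ≠ []) (hl : ρ.lhs = .app f ws)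
    (hconds : ∀ c ∈ ρ.conds, RedStar (SRSys R ar mOf idx)
      (guardT (barT mOf (c.1.subst σ))) (guardT (barT mOf (c.2.subst σ))))
    (j : ℕ) (hj : j ≤ ρ.conds.length) :
    RedStar (SRSys R ar mOf idx) (barT mOf (ρ.lhs.subst σ))
      ((condSRRule mOf idx ρ j).lhs.subst (barSubst mOf σ)) := by
  induction j with
  | zero => rw [condSRRule_zero_lhs_subst mOf idx σ hl]; exact .refl
  | succ j ih =>
    have hstart := Red.of_mem (R := SRSys R ar mOf idx)
      (.inr (.inl ⟨ρ, hρ, hc, j, Nat.le_of_succ_le hj, rfl⟩)) (condSRRule_conds mOf idx ρ j)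
      (barSubst mOf σ)
    rw [condSRRule_rhs_subst mOf idx σ hl hj] at hstart
    rw [condSRRule_succ_lhs_subst mOf idx σ hl hj]
    exact ((ih (Nat.le_of_succ_le hj)).tail hstart).trans
      ((hconds _ (List.getElem_mem hj)).condState_congr (j + 1))

variable (R ar mOf idx) in
/-- The relation `s̄ →*_{SR(R)} ⟨t̄⟩` by which `SR(R)` simulates a step `s →_R t`. Unlike
`⟨s̄⟩ →*_{SR(R)} ⟨t̄⟩`, it is closed under contexts. -/
def BarRed (s t : Term F V) : Prop :=
  RedStar (SRSys R ar mOf idx) (barT mOf s) (guardT (barT mOf t))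

theorem BarRed.of_rule (hρ : ρ ∈ R) (hl : ρ.lhs = .app f ws)
    (hconds : ∀ c ∈ ρ.conds, RedStar (SRSys R ar mOf idx)
      (guardT (barT mOf (c.1.subst σ))) (guardT (barT mOf (c.2.subst σ)))) :
    BarRed R ar mOf idx (ρ.lhs.subst σ) (ρ.rhs.subst σ) := by
  by_cases hc : ρ.conds = []
  · have hred := Red.of_mem (R := SRSys R ar mOf idx) (.inl ⟨ρ, hρ, hc, rfl⟩) rfl (barSubst mOf σ)
    simp only [uncondSRRule, extT_subst_barSubst, guardT_subst, barT_subst_barSubst] at hred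
    exact .single hred
  · have hfinish := Red.of_mem (R := SRSys R ar mOf idx)
      (.inr (.inl ⟨ρ, hρ, hc, _, le_rfl, rfl⟩)) (condSRRule_conds mOf idx ρ _) (barSubst mOf σ)
    rw [condSRRule_length_rhs_subst mOf idx σ hl] at hfinish
    exact (redStar_condSRRule_lhs hρ hc hl hconds _ le_rfl).tail hfinish

theorem BarRed.app {pre post : List (Term F V)} {s t : Term F V}
    (hlen : (pre ++ s :: post).length = ar f) (h : BarRed R ar mOf idx s t) :
    BarRed R ar mOf idx (.app f (pre ++ s :: post)) (.app f (pre ++ t :: post)) := by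
  have hinner := RedStar.app h (.orig f) (pre.map (barT mOf))
    (post.map (barT mOf) ++ List.replicate (mOf f) botT)
  have hshift := red_shift_guardT (R := R) (mOf := mOf) (idx := idx)
    (ts := (pre ++ t :: post).map (barT mOf)) (by simpa using hlen)
    (List.length_replicate (n := mOf f) (a := botT)) pre.length (by simp)
  unfold BarRed
  simp only [barT_app]
  refine Relation.ReflTransGen.tail ?_ hshift
  simpa [RedStar] using hinner

theorem redStar_guardT_barT_of_reflGen {s t : Term F V}
    (h : Relation.ReflGen (BarRed R ar mOf idx) s t) :
    RedStar (SRSys R ar mOf idx) (guardT (barT mOf s)) (guardT (barT mOf t)) := by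
  cases h with
  | refl => exact .refl
  | single h => exact (RedStar.guard h).tail (red_guardT_guardT _)

theorem LevelStep.reflGen_barRed_trim (hS : GoodSetup R ar mOf idx) (d : Term F V) (n : ℕ)
    {s t : Term F V} (h : LevelStep R n s t) :
    Relation.ReflGen (BarRed R ar mOf idx) (Term.trim ar d s) (Term.trim ar d t) := by
  induction n generalizing s t with
  | zero => exact h.elim
  | succ n ih =>
    refine CtxStep.reflGen_trim ?_ (fun _ _ _ _ _ => BarRed.app) h
    rintro _ _ ⟨ρ, hρ, σ, rfl, rfl, hconds⟩
    obtain ⟨hWF, hlhsApp, -⟩ := hS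
    obtain ⟨hlhs, hrhs, hcondsWF⟩ := hWF ρ hρ
    obtain ⟨f, ws, hl⟩ := hlhsApp ρ hρ
    rw [hlhs.trim_subst, hrhs.trim_subst]
    refine BarRed.of_rule hρ hl fun c hc => ?_
    rw [← (hcondsWF c hc).1.trim_subst, ← (hcondsWF c hc).2.trim_subst]
    exact Relation.ReflTransGen.lift' (fun u => guardT (barT mOf (Term.trim ar d u)))
      (fun _ _ hstep => redStar_guardT_barT_of_reflGen (ih hstep)) _ _ (hconds c hc)

end Simulation

theorem SR_complete_general {F V : Type} [DecidableEq V] {R : CTRS F V} {ar mOf : F → ℕ}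
    {idx : CRule F V → ℕ} (hS : GoodSetup R ar mOf idx) {s t : Term F V} (hs : s.WF ar)
    (ht : t.WF ar) (h : RedStar R s t) :
    RedStar (SRSys R ar mOf idx) (guardT (barT mOf s)) (guardT (barT mOf t)) := by
  have htrim := Relation.ReflTransGen.lift' (fun u => guardT (barT mOf (Term.trim ar s u)))
    (fun _ _ ⟨n, hstep⟩ => redStar_guardT_barT_of_reflGen (hstep.reflGen_barRed_trim hS s n)) _ _ h
  simpa only [RedStar, Function.onFun, hs.trim_eq, ht.trim_eq] using htrim

/-- **Completeness of the SR transformation for `U`-WLL DCTRSs.**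
For all terms `s, t ∈ T(F,V)`, if `s →*_R t` then `⟨s̄⟩ →*_{SR(R)} ⟨t̄⟩`. -/
theorem SR_complete {F V : Type} [DecidableEq V]
    (R : CTRS F V) (ar mOf : F → ℕ) (idx : CRule F V → ℕ)
    (hS : GoodSetup R ar mOf idx) (hD : IsDCTRS R) (hU : IsUWLL R)
    (s t : Term F V) (hs : s.WF ar) (ht : t.WF ar)
    (h : RedStar R s t) :
    RedStar (SRSys R ar mOf idx) (guardT (barT mOf s)) (guardT (barT mOf t)) :=
  SR_complete_general hS hs ht h
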